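/- Let f ∈ R := MvPolynomial ℂ (Fin 2) be squarefree. Then the quotient A ⧸ Ideal.span {ι f, ι(i_f)} is NOT a finite-dimensional ℂ-vector space if and only if there exist a, b ∈ ℂ with (a,b) ≠ (0,0) such that the linear polynomial a·X + b·Y divides f in R. -/

import Mathlib

open MvPolynomial

noncomputable section

/-- Partial derivative with respect to the first variable `X`. -/
def dx (f : MvPolynomial (Fin 2) ℂ) : MvPolynomial (Fin 2) ℂ := pderiv 0 f

/-- Partial derivative with respect to the second variable `Y`. -/
def dy (f : MvPolynomial (Fin 2) ℂ) : MvPolynomial (Fin 2) ℂ := pderiv 1 f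

/-- The inflection polynomial `i_f = f_y²·f_xx − 2·f_x·f_y·f_xy + f_x²·f_yy`. -/
def infl (f : MvPolynomial (Fin 2) ℂ) : MvPolynomial (Fin 2) ℂ :=
  (dy f) ^ 2 * dx (dx f) - 2 * dx f * dy f * dy (dx f) + (dx f) ^ 2 * dy (dy f)

/-- The vertex polynomial
`v_f = (f_x² + f_y²)(f_x³ f_yyy − 3 f_x² f_y f_xyy + 3 f_x f_y² f_xxy − f_y³ f_xxx)
      − 3((f_x² − f_y²) f_xy − f_x f_y (f_xx − f_yy)) · i_f`. -/
def vert (f : MvPolynomial (Fin 2) ℂ) : MvPolynomial (Fin 2) ℂ :=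
  ((dx f) ^ 2 + (dy f) ^ 2) *
      ((dx f) ^ 3 * dy (dy (dy f)) - 3 * (dx f) ^ 2 * dy f * dy (dy (dx f)) +
        3 * dx f * (dy f) ^ 2 * dy (dx (dx f)) - (dy f) ^ 3 * dx (dx (dx f))) -
    3 * (((dx f) ^ 2 - (dy f) ^ 2) * dy (dx f) - dx f * dy f * (dx (dx f) - dy (dy f))) *
      infl f

/-- The canonical map from polynomials to formal power series in two variables. -/
def ι : MvPolynomial (Fin 2) ℂ →+* MvPowerSeries (Fin 2) ℂ :=
  MvPolynomial.coeToMvPowerSeries.ringHom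

/-- The local intersection number at the origin of the curves `g = 0` and `h = 0`:
the `ℂ`-dimension of `ℂ⟦x,y⟧/⟨g,h⟩`. -/
def interMult (g h : MvPolynomial (Fin 2) ℂ) : ℕ :=
  Module.finrank ℂ (MvPowerSeries (Fin 2) ℂ ⧸ Ideal.span {ι g, ι h})

end

/-!
If `K⟦x, y⟧ / (f, i_f)` has infinite dimension, then some prime of `K⟦x, y⟧` over `(f, i_f)` misses
a variable; it contracts to a non-maximal prime of the two-dimensional ring `K[x, y]`, which yields
a common prime factor `p` of `f` and `i_f` with `p(0) = 0`. Modulo `p`, Leibniz gives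
`i_{pg} = g³ i_p`, so squarefreeness of `f` forces `p ∣ i_p`.

Now `i_p` is the numerator of the derivative of the slope `p_x / p_y` along the Hamiltonian field
`p_y ∂_x - p_x ∂_y`, which is tangent to the curve `p = 0`. The function field of the curve has
transcendence degree at most one, so the constants of a nonzero derivation of it are the scalars:
the tangent direction `(b, -a)` is constant along the curve. Restricted to the line through the
origin in that direction, `p` divides its own derivative and vanishes at `0`, so it is zero, and
`a x + b y` divides `p`.

Conversely, a linear factor of `f` divides `i_f`, and the power series vanishing on that line form a
prime ideal containing `f` and `i_f` but not both variables.
-/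

section PowerSeriesQuotient

variable {σ R K : Type*} [CommRing R] [Field K]

theorem mem_ideal_of_coeff_eq_zero_of_X_pow_mem
    {J : Ideal (MvPowerSeries σ R)} (n : σ → ℕ) (s : Finset σ)
    (hX : ∀ i ∈ s, (MvPowerSeries.X i : MvPowerSeries σ R) ^ n i ∈ J) {φ : MvPowerSeries σ R}
    (hφ : ∀ e : σ →₀ ℕ, (∀ i ∈ s, e i < n i) → MvPowerSeries.coeff e φ = 0) : φ ∈ J := by
  classical
  induction s using Finset.induction_on generalizing φ with
  | empty =>
    have hφ0 : φ = 0 := MvPowerSeries.ext fun e => by simpa using hφ e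
    exact hφ0 ▸ J.zero_mem
  | insert j s _ ih =>
    let ψ : MvPowerSeries σ R := fun e => if e j < n j then 0 else MvPowerSeries.coeff e φ
    have coeff_ψ (e : σ →₀ ℕ) :
        MvPowerSeries.coeff e ψ = if e j < n j then 0 else MvPowerSeries.coeff e φ := rfl
    have hψ : ψ ∈ J := by
      refine J.mem_of_dvd (MvPowerSeries.X_pow_dvd_iff.2 fun e he => ?_)
        (hX j (Finset.mem_insert_self j s))
      rw [coeff_ψ, if_pos he]
    have hφψ : φ - ψ ∈ J := by
      refine ih (fun i hi => hX i (Finset.mem_insert_of_mem hi)) fun e he => ?_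
      rw [map_sub, coeff_ψ]
      split_ifs with hj
      · rw [sub_zero]
        exact hφ e (Finset.forall_mem_insert _ _ _ |>.2 ⟨hj, he⟩)
      · exact sub_self _
    exact sub_add_cancel φ ψ ▸ J.add_mem hφψ hψ

theorem finite_mvPowerSeries_quotient_of_X_mem_radical [Finite σ] [IsNoetherianRing R]
    {J : Ideal (MvPowerSeries σ R)}
    (hJ : ∀ i, MvPowerSeries.X i ∈ J.radical) :
    Module.Finite R (MvPowerSeries σ R ⧸ J) := by
  classical
  have := Fintype.ofFinite σ
  choose n hn using hJ
  let box : Set (σ →₀ ℕ) := Set.Iic (Finsupp.equivFunOnFinite.symm n)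
  let coeffs : MvPowerSeries σ R →ₗ[R] (box → R) :=
    LinearMap.pi fun e => MvPowerSeries.coeff (e : σ →₀ ℕ)
  have finite_box : Finite box := (Set.finite_Iic _).to_subtype
  have ker_le : LinearMap.ker coeffs ≤ J.restrictScalars R := fun φ hφ =>
    mem_ideal_of_coeff_eq_zero_of_X_pow_mem n Finset.univ (fun i _ => hn i) fun e he =>
      congrFun (LinearMap.mem_ker.1 hφ) ⟨e, fun i => (he i (Finset.mem_univ i)).le⟩
  have : Module.Finite R (MvPowerSeries σ R ⧸ LinearMap.ker coeffs) :=
    Module.Finite.equiv coeffs.quotKerEquivRange.symm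
  have : Module.Finite R (MvPowerSeries σ R ⧸ J.restrictScalars R) :=
    Module.Finite.of_surjective (Submodule.factor ker_le) (Submodule.factor_surjective ker_le)
  exact Module.Finite.equiv (Submodule.Quotient.restrictScalarsEquiv R J)

theorem X_mem_of_finite_mvPowerSeries_quotient {Q : Ideal (MvPowerSeries σ K)} [Q.IsPrime]
    [Module.Finite K (MvPowerSeries σ K ⧸ Q)] (i : σ) : MvPowerSeries.X i ∈ Q := by
  have : IsArtinianRing (MvPowerSeries σ K ⧸ Q) := IsArtinianRing.of_finite K _
  have hQ : Q.IsMaximal := Ideal.Quotient.maximal_of_isField Q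
    (IsArtinianRing.isField_of_isDomain _)
  rw [IsLocalRing.eq_maximalIdeal hQ, IsLocalRing.mem_maximalIdeal, mem_nonunits_iff,
    MvPowerSeries.isUnit_iff_constantCoeff, MvPowerSeries.constantCoeff_X]
  exact not_isUnit_zero

theorem finite_mvPowerSeries_quotient_iff [Finite σ] {J : Ideal (MvPowerSeries σ K)} :
    Module.Finite K (MvPowerSeries σ K ⧸ J) ↔
      ∀ Q : Ideal (MvPowerSeries σ K), Q.IsPrime → J ≤ Q → ∀ i, MvPowerSeries.X i ∈ Q := by
  refine ⟨fun _ Q _ hJQ => ?_, fun h => finite_mvPowerSeries_quotient_of_X_mem_radical fun i => ?_⟩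
  · have : Module.Finite K (MvPowerSeries σ K ⧸ Q) :=
      Module.Finite.of_surjective (Ideal.Quotient.factorₐ K hJQ).toLinearMap
        (Ideal.Quotient.factor_surjective hJQ)
    exact X_mem_of_finite_mvPowerSeries_quotient
  · rw [Ideal.radical_eq_sInf, Submodule.mem_sInf]
    exact fun Q hQ => h Q hQ.2 hQ.1 i

end PowerSeriesQuotient

section LocalIntersection

variable {σ R K : Type*} [CommRing R] [IsDomain R] [Field K]

theorem eq_span_singleton_of_lt_of_ringKrullDim_le_two (hR : ringKrullDim R ≤ 2) {p : R}
    (hp : Prime p) {P M : Ideal R} [P.IsPrime] [M.IsPrime] (hpP : p ∈ P) (hPM : P < M) :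
    P = Ideal.span {p} := by
  have : (Ideal.span {p}).IsPrime := (Ideal.span_singleton_prime hp.ne_zero).2 hp
  by_contra hne
  have bot_lt : ⊥ < Ideal.span {p} := bot_lt_iff_ne_bot.2 (by simpa using hp.ne_zero)
  have lt_P : Ideal.span {p} < P :=
    lt_of_le_of_ne' ((Ideal.span_singleton_le_iff_mem P).2 hpP) hne
  have h₁ := Ideal.height_add_one_le_of_lt_of_isPrime bot_lt
  have h₂ := Ideal.height_add_one_le_of_lt_of_isPrime lt_P
  have h₃ := Ideal.height_add_one_le_of_lt_of_isPrime hPM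
  have three_le : (3 : ℕ∞) ≤ M.height := by
    grw [← h₃, ← h₂, ← h₁, Ideal.height_bot]
    norm_num
  have le_two : M.height ≤ 2 :=
    WithBot.coe_le_coe.1 (Ideal.height_le_ringKrullDim_of_isPrime.trans hR)
  exact absurd (three_le.trans le_two) (by decide)

theorem comap_coeToMvPowerSeries_le_ker_constantCoeff {Q : Ideal (MvPowerSeries σ K)}
    (hQ : Q ≠ ⊤) :
    Q.comap (coeToMvPowerSeries.ringHom (R := K)) ≤ RingHom.ker (constantCoeff (σ := σ)) := by
  intro q hq
  by_contra hq0
  refine hQ (Q.eq_top_of_isUnit_mem hq (MvPowerSeries.isUnit_iff_constantCoeff.2 ?_))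
  exact IsUnit.mk0 _ hq0

theorem finite_quotient_span_pair_of_forall_prime_constantCoeff_ne_zero
    {F G : MvPolynomial (Fin 2) K}
    (h : ∀ p, Prime p → p ∣ F → p ∣ G → constantCoeff p ≠ 0) :
    Module.Finite K (MvPowerSeries (Fin 2) K ⧸ Ideal.span {(F : MvPowerSeries (Fin 2) K), ↑G}) := by
  refine finite_mvPowerSeries_quotient_iff.2 fun Q hQ hJQ i => ?_
  let P := Q.comap (coeToMvPowerSeries.ringHom (σ := Fin 2) (R := K))
  let M := RingHom.ker (constantCoeff (σ := Fin 2) (R := K))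
  have : M.IsPrime := RingHom.ker_isPrime _
  have hF : F ∈ P := hJQ (Ideal.subset_span (Set.mem_insert _ _))
  have hG : G ∈ P := hJQ (Ideal.subset_span (Set.mem_insert_of_mem _ rfl))
  have P_ne_bot : P ≠ ⊥ := fun hP => by
    rw [hP, Ideal.mem_bot] at hF hG
    exact h (X 0) X_prime (hF ▸ dvd_zero _) (hG ▸ dvd_zero _) (constantCoeff_X _ _)
  have hle : P ≤ M := comap_coeToMvPowerSeries_le_ker_constantCoeff hQ.ne_top
  rcases hle.eq_or_lt with hPM | hPM
  · have hX : X i ∈ P := hPM ▸ constantCoeff_X K i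
    simpa [P] using hX
  · have hP : P.IsPrime := Ideal.comap_isPrime _ _
    obtain ⟨p, hpP, hp⟩ := hP.exists_mem_prime_of_ne_bot P_ne_bot
    have dim_le : ringKrullDim (MvPolynomial (Fin 2) K) ≤ 2 := by
      simp [MvPolynomial.ringKrullDim_of_isNoetherianRing]
    have P_eq := eq_span_singleton_of_lt_of_ringKrullDim_le_two dim_le hp hpP hPM
    rw [P_eq, Ideal.mem_span_singleton] at hF hG
    exact absurd (hPM.le hpP) (h p hp hF hG)

theorem exists_prime_linear_mem_X_notMem {a b : R} (hab : (a, b) ≠ (0, 0)) :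
    ∃ Q : Ideal (MvPowerSeries (Fin 2) R), Q.IsPrime ∧
      ((C a * X 0 + C b * X 1 : MvPolynomial (Fin 2) R) : MvPowerSeries (Fin 2) R) ∈ Q ∧
      ∃ i, MvPowerSeries.X i ∉ Q := by
  let line : Fin 2 → PowerSeries R :=
    ![PowerSeries.C b * PowerSeries.X, -(PowerSeries.C a * PowerSeries.X)]
  have hline : MvPowerSeries.HasSubst line := by
    refine MvPowerSeries.hasSubst_of_constantCoeff_zero fun i => ?_
    change PowerSeries.constantCoeff _ = 0
    fin_cases i <;> simp [line]
  let T : MvPowerSeries (Fin 2) R →ₐ[R] PowerSeries R := MvPowerSeries.substAlgHom hline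
  have T_X (i : Fin 2) : T (MvPowerSeries.X i) = line i := MvPowerSeries.substAlgHom_X hline i
  have T_C (r : R) : T (MvPowerSeries.C r) = PowerSeries.C r := T.commutes r
  refine ⟨RingHom.ker T, RingHom.ker_isPrime T, ?_, ?_⟩
  · simp only [RingHom.mem_ker, coe_add, coe_mul, coe_C, coe_X, map_add, map_mul, T_X, T_C, line,
      Matrix.cons_val_zero, Matrix.cons_val_one]
    ring
  · by_contra! hX
    simp only [RingHom.mem_ker, T_X] at hX
    have hb : b = 0 := PowerSeries.C_injective (by simpa [line] using hX 0)
    have ha : a = 0 := PowerSeries.C_injective (by simpa [line] using hX 1)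
    exact hab (by rw [ha, hb])

theorem not_finite_quotient_span_pair_of_linear_dvd {a b : K} (hab : (a, b) ≠ (0, 0))
    {F G : MvPolynomial (Fin 2) K} (hF : C a * X 0 + C b * X 1 ∣ F)
    (hG : C a * X 0 + C b * X 1 ∣ G) :
    ¬ Module.Finite K
      (MvPowerSeries (Fin 2) K ⧸ Ideal.span {(F : MvPowerSeries (Fin 2) K), ↑G}) := by
  obtain ⟨Q, hQ, hlQ, i, hi⟩ := exists_prime_linear_mem_X_notMem hab
  have coe_mem {q : MvPolynomial (Fin 2) K} (hq : C a * X 0 + C b * X 1 ∣ q) :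
      (q : MvPowerSeries (Fin 2) K) ∈ Q :=
    Q.mem_of_dvd (map_dvd coeToMvPowerSeries.ringHom hq) hlQ
  have span_le : Ideal.span {(F : MvPowerSeries (Fin 2) K), ↑G} ≤ Q :=
    Ideal.span_le.2 (Set.pair_subset (coe_mem hF) (coe_mem hG))
  exact fun hfin => hi (finite_mvPowerSeries_quotient_iff.1 hfin Q hQ span_le i)

end LocalIntersection

section InflectionPolynomial

variable {R : Type*} [CommRing R]

/-- The inflection polynomial of the plane curve `f = 0`, by the formula of `infl` but over an
arbitrary commutative ring. -/
noncomputable def inflectionPoly (f : MvPolynomial (Fin 2) R) : MvPolynomial (Fin 2) R :=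
  (pderiv 1 f) ^ 2 * pderiv 0 (pderiv 0 f) - 2 * pderiv 0 f * pderiv 1 f * pderiv 1 (pderiv 0 f) +
    (pderiv 0 f) ^ 2 * pderiv 1 (pderiv 1 f)

theorem pderiv_comm {σ : Type*} (i j : σ) (f : MvPolynomial σ R) :
    pderiv i (pderiv j f) = pderiv j (pderiv i f) := by
  have h : ⁅pderiv (R := R) i, pderiv (R := R) j⁆ = 0 := by
    classical
    refine derivation_ext fun k => ?_
    simp [Derivation.commutator_apply, pderiv_X, Pi.single_apply, apply_ite]
  exact sub_eq_zero.1 (Derivation.congr_fun h f)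

theorem dvd_inflectionPoly_mul_sub (p g : MvPolynomial (Fin 2) R) :
    p ∣ inflectionPoly (p * g) - g ^ 3 * inflectionPoly p := by
  rw [← Ideal.mem_span_singleton, ← Ideal.Quotient.eq_zero_iff_mem]
  have hp : Ideal.Quotient.mk (Ideal.span {p}) p = 0 := by
    rw [Ideal.Quotient.eq_zero_iff_mem, Ideal.mem_span_singleton]
  simp only [inflectionPoly, Derivation.leibniz, smul_eq_mul, map_add, map_sub, map_mul, map_pow,
    map_ofNat, hp, pderiv_comm 1 0 p]
  ring

theorem dvd_inflectionPoly_of_dvd_inflectionPoly_mul {p g : MvPolynomial (Fin 2) R}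
    (hp : Prime p) (hg : ¬ p ∣ g) (h : p ∣ inflectionPoly (p * g)) : p ∣ inflectionPoly p := by
  have hdvd : p ∣ g ^ 3 * inflectionPoly p := (dvd_sub_right h).1 (dvd_inflectionPoly_mul_sub p g)
  exact (hp.dvd_or_dvd hdvd).resolve_left fun hg3 => hg (hp.dvd_of_dvd_pow hg3)

theorem inflectionPoly_linear (a b : R) :
    inflectionPoly (C a * X 0 + C b * X 1) = 0 := by
  simp [inflectionPoly, pderiv_X, Derivation.leibniz]

theorem linear_dvd_inflectionPoly {a b : R} {f : MvPolynomial (Fin 2) R}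
    (h : C a * X 0 + C b * X 1 ∣ f) : C a * X 0 + C b * X 1 ∣ inflectionPoly f := by
  obtain ⟨g, rfl⟩ := h
  have h := dvd_inflectionPoly_mul_sub (C a * X 0 + C b * X 1) g
  rwa [inflectionPoly_linear, mul_zero, sub_zero] at h

/-- The Hamiltonian derivation `p_y ∂_x - p_x ∂_y` of `p`, the vector field tangent to the level
curves of `p`. -/
noncomputable def hamiltonianDerivation (p : MvPolynomial (Fin 2) R) :
    Derivation R (MvPolynomial (Fin 2) R) (MvPolynomial (Fin 2) R) :=
  pderiv 1 p • pderiv 0 - pderiv 0 p • pderiv 1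

theorem hamiltonianDerivation_apply (p q : MvPolynomial (Fin 2) R) :
    hamiltonianDerivation p q = pderiv 1 p * pderiv 0 q - pderiv 0 p * pderiv 1 q := rfl

theorem hamiltonianDerivation_self (p : MvPolynomial (Fin 2) R) :
    hamiltonianDerivation p p = 0 := by
  rw [hamiltonianDerivation_apply]
  ring

theorem inflectionPoly_eq_hamiltonianDerivation (p : MvPolynomial (Fin 2) R) :
    inflectionPoly p = pderiv 1 p * hamiltonianDerivation p (pderiv 0 p) -
      pderiv 0 p * hamiltonianDerivation p (pderiv 1 p) := by
  simp only [inflectionPoly, hamiltonianDerivation_apply, pderiv_comm 0 1 p]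
  ring

end InflectionPolynomial

section LineRestriction

variable {R : Type*} [CommRing R]

theorem derivation_aeval {σ A M : Type*} [Fintype σ] [CommRing A] [Algebra R A] [AddCommGroup M]
    [Module A M] [Module R M] (D : Derivation R A M) (v : σ → A) (q : MvPolynomial σ R) :
    D (aeval v q) = ∑ i, aeval v (pderiv i q) • D (v i) := by
  classical
  induction q using MvPolynomial.induction_on with
  | C r => simp
  | add q r hq hr => simp [hq, hr, add_smul, Finset.sum_add_distrib]
  | mul_X q j hq =>
    simp [Derivation.leibniz, hq, pderiv_X, Pi.single_apply, add_smul, Finset.sum_add_distrib,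
      Finset.smul_sum, mul_smul, ite_smul, apply_ite]

/-- Restriction of polynomials to the line `a x + b y = 0`, parametrised by `t ↦ (b t, -a t)`. -/
noncomputable def lineRestriction (a b : R) :
    MvPolynomial (Fin 2) R →ₐ[R] Polynomial R :=
  aeval ![Polynomial.C b * Polynomial.X, -(Polynomial.C a * Polynomial.X)]

theorem derivative_lineRestriction (a b : R) (p : MvPolynomial (Fin 2) R) :
    Polynomial.derivative (lineRestriction a b p) =
      lineRestriction a b (C b * pderiv 0 p - C a * pderiv 1 p) := by
  have h := derivation_aeval Polynomial.derivative'
    ![Polynomial.C b * Polynomial.X, -(Polynomial.C a * Polynomial.X)] p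
  simp only [Polynomial.derivative'_apply, smul_eq_mul, Fin.sum_univ_two, Matrix.cons_val_zero,
    Matrix.cons_val_one, Polynomial.derivative_neg, Polynomial.derivative_C_mul,
    Polynomial.derivative_X, mul_one] at h
  simp only [lineRestriction, h, map_sub, map_mul, MvPolynomial.aeval_C, Polynomial.algebraMap_eq]
  ring

theorem coeff_zero_lineRestriction (a b : R) (p : MvPolynomial (Fin 2) R) :
    (lineRestriction a b p).coeff 0 = constantCoeff p := by
  have h : (Polynomial.constantCoeff).comp (lineRestriction a b).toRingHom = constantCoeff := by
    ext i
    · simp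
    · fin_cases i <;> simp [lineRestriction]
  exact RingHom.congr_fun h p

theorem linear_dvd_of_lineRestriction_eq_zero {a b : R} (hab : IsCoprime a b)
    {p : MvPolynomial (Fin 2) R} (hp : lineRestriction a b p = 0) :
    C a * X 0 + C b * X 1 ∣ p := by
  obtain ⟨u, v, huv⟩ := hab
  set l : MvPolynomial (Fin 2) R := C a * X 0 + C b * X 1
  let w : MvPolynomial (Fin 2) R := C v * X 0 - C u * X 1
  have hCuv : C u * C a + C v * C b = (1 : MvPolynomial (Fin 2) R) := by
    rw [← C_mul, ← C_mul, ← C_add, huv, C_1]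
  have X_zero_eq : X 0 = C b * w + C u * l := by linear_combination -X 0 * hCuv
  have X_one_eq : X 1 = -(C a * w) + C v * l := by linear_combination -X 1 * hCuv
  let π := Ideal.Quotient.mkₐ R (Ideal.span {l})
  have hπl : π l = 0 := Ideal.Quotient.eq_zero_iff_mem.2 (Ideal.mem_span_singleton_self l)
  have hπC (r : R) : π (C r) = algebraMap R _ r := π.commutes r
  have π_X_zero : π (X 0) = algebraMap R _ b * π w := by
    rw [X_zero_eq, map_add, map_mul, map_mul, hπl, hπC, mul_zero, add_zero]
  have π_X_one : π (X 1) = -(algebraMap R _ a * π w) := by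
    rw [X_one_eq, map_add, map_neg, map_mul, map_mul, hπl, hπC, mul_zero, add_zero]
  have factor : (Polynomial.aeval (π w)).comp (lineRestriction a b) = π := by
    refine algHom_ext fun i => ?_
    fin_cases i
    · simp [lineRestriction, π_X_zero]
    · simp [lineRestriction, π_X_one]
  have hπp : π p = 0 := by rw [← factor, AlgHom.comp_apply, hp, map_zero]
  exact Ideal.mem_span_singleton.1 (Ideal.Quotient.eq_zero_iff_mem.1 hπp)

theorem linear_dvd_of_dvd_directional_derivative [IsDomain R] [CharZero R] {a b : R}
    (hab : IsCoprime a b) {p : MvPolynomial (Fin 2) R} (hp0 : constantCoeff p = 0)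
    (hp : p ∣ C b * pderiv 0 p - C a * pderiv 1 p) : C a * X 0 + C b * X 1 ∣ p := by
  have dvd_derivative : lineRestriction a b p ∣ Polynomial.derivative (lineRestriction a b p) :=
    derivative_lineRestriction a b p ▸ map_dvd _ hp
  have derivative_eq : Polynomial.derivative (lineRestriction a b p) = 0 :=
    Polynomial.dvd_derivative_iff.1 dvd_derivative
  refine linear_dvd_of_lineRestriction_eq_zero hab ?_
  rw [Polynomial.eq_C_of_derivative_eq_zero derivative_eq, coeff_zero_lineRestriction, hp0,
    Polynomial.C_0]

end LineRestriction

section Constants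

variable {K L : Type*} [Field K] [Field L] [Algebra K L]

/-- The field of constants of a derivation `D` of a field `L`, as an intermediate field over the
base field for which `D` is linear. -/
def derivationConstants (D : Derivation K L L) : IntermediateField K L where
  carrier := {x | D x = 0}
  mul_mem' {x y} hx hy := by simp_all
  add_mem' {x y} hx hy := by simp_all
  algebraMap_mem' r := D.map_algebraMap r
  inv_mem' x hx := by simp_all [Derivation.leibniz_inv]

theorem eq_zero_of_isAlgebraic_derivationConstants [CharZero K] (D : Derivation K L L)
    [Algebra.IsAlgebraic (derivationConstants D) L] : D = 0 := by
  let F := derivationConstants D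
  have : CharZero F := charZero_of_injective_algebraMap (algebraMap K F).injective
  let D' : Derivation F L L := Derivation.mk'
    { toFun := D
      map_add' := map_add D
      map_smul' := fun c x => by
        have hc : D c = 0 := c.2
        simp [IntermediateField.smul_def, hc] }
    fun x y => D.leibniz x y
  have : Algebra.FormallyUnramified F L := .of_isSeparable F L
  have hD' : D' = 0 := by
    rw [← D'.liftKaehlerDifferential_comp, Subsingleton.elim D'.liftKaehlerDifferential 0]
    rfl
  ext x
  exact Derivation.congr_fun hD' x

theorem isAlgebraic_derivationConstants [CharZero K] (hL : Algebra.trdeg K L ≤ 1)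
    {D : Derivation K L L} (hD : D ≠ 0) : Algebra.IsAlgebraic K (derivationConstants D) := by
  let F := derivationConstants D
  by_contra hF
  have : Algebra.Transcendental K F := (Algebra.transcendental_iff_not_isAlgebraic).2 hF
  have one_le : 1 ≤ Algebra.trdeg K F := Cardinal.one_le_iff_pos.2 (trdeg_pos K F)
  have add_le : Algebra.trdeg K F + Algebra.trdeg F L ≤ 1 := (trdeg_add_eq K F).trans_le hL
  have trdeg_eq : Algebra.trdeg F L = 0 := by
    have : Algebra.trdeg F L + 1 ≤ 0 + 1 := by grw [add_comm, one_le, add_le, zero_add]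
    simpa using Cardinal.add_one_le_add_one_iff.1 this
  have : Algebra.IsAlgebraic F L := trdeg_eq_zero_iff.1 trdeg_eq
  exact hD (eq_zero_of_isAlgebraic_derivationConstants D)

theorem exists_eq_algebraMap_of_derivation_eq_zero [IsAlgClosed K] [CharZero K]
    (hL : Algebra.trdeg K L ≤ 1) {D : Derivation K L L} (hD : D ≠ 0) {s : L} (hs : D s = 0) :
    ∃ c : K, algebraMap K L c = s := by
  have := isAlgebraic_derivationConstants hL hD
  obtain ⟨c, hc⟩ := (IsAlgClosed.algebraMap_bijective_of_isIntegral (k := K)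
    (K := derivationConstants D)).2 ⟨s, hs⟩
  exact ⟨c, congrArg Subtype.val hc⟩

end Constants

section FunctionField

variable {R A K : Type*} [CommRing R] [CommRing A] [Algebra R A] [Field K] [Algebra K A]

theorem exists_derivation_localization (L : Type*) [CommRing L] [Algebra R L] [Algebra A L]
    [IsScalarTower R A L] (M : Submonoid A) [IsLocalization M L] (d : Derivation R A A) :
    ∃ D : Derivation R L L, ∀ x, D (algebraMap A L x) = algebraMap A L (d x) := by
  let ω : Ω[A⁄R] →ₗ[A] L := (Algebra.linearMap A L).comp d.liftKaehlerDifferential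
  let Ω' : Ω[L⁄R] →ₗ[A] L := IsLocalizedModule.lift M (KaehlerDifferential.map R R A L) ω
    (IsLocalizedModule.map_units (Algebra.linearMap A L))
  refine ⟨(Ω'.extendScalarsOfIsLocalization M L).compDer (KaehlerDifferential.D R L), fun x => ?_⟩
  calc Ω' (KaehlerDifferential.D R L (algebraMap A L x))
      = Ω' (KaehlerDifferential.map R R A L (KaehlerDifferential.D R A x)) := by
        rw [KaehlerDifferential.map_D]
    _ = algebraMap A L (d.liftKaehlerDifferential (KaehlerDifferential.D R A x)) :=
        IsLocalizedModule.lift_apply ..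
    _ = algebraMap A L (d x) := by rw [Derivation.liftKaehlerDifferential_comp_D]

theorem algebraMap_fractionRing_quotient_eq_zero_iff {I : Ideal A} [I.IsPrime] {x : A} :
    algebraMap A (FractionRing (A ⧸ I)) x = 0 ↔ x ∈ I := by
  rw [IsScalarTower.algebraMap_apply A (A ⧸ I), FaithfulSMul.algebraMap_eq_zero_iff,
    Ideal.Quotient.algebraMap_eq, Ideal.Quotient.eq_zero_iff_mem]

theorem exists_derivation_fractionRing_quotient {I : Ideal A} [I.IsPrime]
    {d : Derivation R A A} (hd : ∀ x ∈ I, d x ∈ I) :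
    ∃ D : Derivation R (FractionRing (A ⧸ I)) (FractionRing (A ⧸ I)),
      ∀ x, D (algebraMap A _ x) = algebraMap A _ (d x) := by
  let dI : Derivation R (A ⧸ I) (A ⧸ I) :=
    Derivation.liftOfSurjective (f := Ideal.Quotient.mkₐ R I) (Ideal.Quotient.mkₐ_surjective R I)
      (d := d) fun x hx =>
        Ideal.Quotient.eq_zero_iff_mem.2 (hd x (Ideal.Quotient.eq_zero_iff_mem.1 hx))
  obtain ⟨D, hD⟩ := exists_derivation_localization (FractionRing (A ⧸ I)) (nonZeroDivisors _) dI
  refine ⟨D, fun x => ?_⟩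
  rw [IsScalarTower.algebraMap_apply A (A ⧸ I), hD,
    IsScalarTower.algebraMap_apply A (A ⧸ I) _ (d x)]
  exact congrArg _ (Derivation.liftOfSurjective_apply ..)

theorem trdeg_fractionRing [Nontrivial R] [IsDomain A] [FaithfulSMul R A] :
    Algebra.trdeg R (FractionRing A) = Algebra.trdeg R A := by
  have : Algebra.IsAlgebraic A (FractionRing A) := IsLocalization.isAlgebraic _ (nonZeroDivisors A)
  rw [← trdeg_add_eq R A, trdeg_eq_zero (R := A), add_zero]

theorem exists_sub_smul_mem_of_wronskian_mem [IsAlgClosed K] [CharZero K]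
    {I : Ideal A} [I.IsPrime] (hI : Algebra.trdeg K (A ⧸ I) ≤ 1)
    {d : Derivation K A A} (hd : ∀ x ∈ I, d x ∈ I) {x y z : A} (hz : d z ∉ I) (hy : y ∉ I)
    (hxy : y * d x - x * d y ∈ I) : ∃ c : K, x - c • y ∈ I := by
  obtain ⟨D, hD⟩ := exists_derivation_fractionRing_quotient hd
  let L := FractionRing (A ⧸ I)
  have hL : Algebra.trdeg K L ≤ 1 := trdeg_fractionRing.trans_le hI
  have hD0 : D ≠ 0 := by
    rintro rfl
    exact hz (algebraMap_fractionRing_quotient_eq_zero_iff.1 (hD z).symm)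
  have hyL : algebraMap A L y ≠ 0 := algebraMap_fractionRing_quotient_eq_zero_iff.not.2 hy
  have hs : D (algebraMap A L x / algebraMap A L y) = 0 := by
    have hxyL := algebraMap_fractionRing_quotient_eq_zero_iff.2 hxy
    rw [Derivation.leibniz_div, hD, hD, smul_eq_mul, smul_eq_mul, smul_eq_mul,
      ← map_mul, ← map_mul, ← map_sub, hxyL, mul_zero]
  obtain ⟨c, hc⟩ := exists_eq_algebraMap_of_derivation_eq_zero hL hD0 hs
  refine ⟨c, algebraMap_fractionRing_quotient_eq_zero_iff.1 ?_⟩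
  rw [map_sub, Algebra.smul_def, map_mul, ← IsScalarTower.algebraMap_apply K A L, hc,
    div_mul_cancel₀ _ hyL, sub_self]

theorem trdeg_mvPolynomial_quotient_lt {σ : Type*} [Finite σ]
    {I : Ideal (MvPolynomial σ K)} [I.IsPrime] (hI : I ≠ ⊥) :
    Algebra.trdeg K (MvPolynomial σ K ⧸ I) < Nat.card σ := by
  by_contra! h
  let x : σ → MvPolynomial σ K ⧸ I := fun i => Ideal.Quotient.mkₐ K I (X i)
  have hx : aeval x = Ideal.Quotient.mkₐ K I := by ext i; simp [x]
  have adjoin_eq : Algebra.adjoin K (Set.range x) = ⊤ := by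
    rw [Algebra.adjoin_range_eq_range_aeval, hx, AlgHom.range_eq_top]
    exact Ideal.Quotient.mkₐ_surjective K I
  have : Algebra.IsAlgebraic (Algebra.adjoin K (Set.range x)) (MvPolynomial σ K ⧸ I) := by
    rw [adjoin_eq]
    exact ⟨fun y => isAlgebraic_algebraMap (⟨y, trivial⟩ : (⊤ : Subalgebra K _))⟩
  have basis : IsTranscendenceBasis K x := by
    refine Algebra.IsAlgebraic.isTranscendenceBasis_of_lift_le_trdeg_of_finite K x ?_
    rw [← Nat.cast_card, Cardinal.lift_natCast]
    exact Cardinal.nat_le_lift_iff.2 h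
  have inj : Function.Injective (Ideal.Quotient.mkₐ K I) := hx ▸ basis.1
  refine hI ((Submodule.eq_bot_iff I).2 fun q hq => inj ?_)
  rw [map_zero]
  exact Ideal.Quotient.eq_zero_iff_mem.2 hq

theorem trdeg_quotient_span_singleton_le_one {p : MvPolynomial (Fin 2) K} (hp : Prime p) :
    Algebra.trdeg K (MvPolynomial (Fin 2) K ⧸ Ideal.span {p}) ≤ 1 := by
  have : (Ideal.span {p}).IsPrime := (Ideal.span_singleton_prime hp.ne_zero).2 hp
  have lt_two := trdeg_mvPolynomial_quotient_lt (I := Ideal.span {p}) (by simpa using hp.ne_zero)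
  rw [Nat.card_fin] at lt_two
  exact Order.lt_succ_iff.1 (by rwa [← Nat.cast_one, Cardinal.succ_natCast, ← Nat.cast_add_one])

theorem derivation_mem_span_singleton {d : Derivation R A A} {p x : A}
    (hd : d p ∈ Ideal.span {p}) (hx : x ∈ Ideal.span {p}) :
    d x ∈ Ideal.span {p} := by
  obtain ⟨g, rfl⟩ := Ideal.mem_span_singleton.1 hx
  rw [Derivation.leibniz]
  exact Ideal.add_mem _ (Ideal.mul_mem_right _ _ (Ideal.mem_span_singleton_self p))
    (Ideal.mul_mem_left _ _ hd)

end FunctionField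

section InflectionNumber

variable {K : Type*} [Field K] [IsAlgClosed K] [CharZero K]

theorem exists_isCoprime_dvd_pderiv_of_dvd_inflectionPoly
    {p : MvPolynomial (Fin 2) K} (hp : Prime p) (h : p ∣ inflectionPoly p) :
    ∃ a b : K, IsCoprime a b ∧ p ∣ C b * pderiv 0 p - C a * pderiv 1 p := by
  by_cases hpy : p ∣ pderiv 1 p
  · exact ⟨1, 0, isCoprime_one_left, by simpa using hpy⟩
  simp only [← Ideal.mem_span_singleton] at h hpy ⊢
  have : (Ideal.span {p}).IsPrime := (Ideal.span_singleton_prime hp.ne_zero).2 hp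
  have self_mem : hamiltonianDerivation p p ∈ Ideal.span {p} := by
    rw [hamiltonianDerivation_self]
    exact zero_mem _
  have X_notMem : hamiltonianDerivation p (X 0) ∉ Ideal.span {p} := by
    simpa [hamiltonianDerivation_apply] using hpy
  rw [inflectionPoly_eq_hamiltonianDerivation] at h
  obtain ⟨c, hc⟩ := exists_sub_smul_mem_of_wronskian_mem (trdeg_quotient_span_singleton_le_one hp)
    (fun _ => derivation_mem_span_singleton self_mem) X_notMem hpy h
  exact ⟨c, 1, isCoprime_one_right, by simpa [smul_eq_C_mul] using hc⟩

theorem exists_linear_dvd_of_prime_dvd_inflectionPoly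
    {f p : MvPolynomial (Fin 2) K} (hf : Squarefree f) (hp : Prime p) (hp0 : constantCoeff p = 0)
    (hpf : p ∣ f) (hpi : p ∣ inflectionPoly f) :
    ∃ a b : K, (a, b) ≠ (0, 0) ∧ C a * X 0 + C b * X 1 ∣ f := by
  obtain ⟨g, rfl⟩ := hpf
  have hpg : ¬ p ∣ g := fun hpg => hp.not_isUnit (hf p (mul_dvd_mul_left p hpg))
  have hpp : p ∣ inflectionPoly p := dvd_inflectionPoly_of_dvd_inflectionPoly_mul hp hpg hpi
  obtain ⟨a, b, hab, hd⟩ := exists_isCoprime_dvd_pderiv_of_dvd_inflectionPoly hp hpp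
  refine ⟨a, b, ?_, (linear_dvd_of_dvd_directional_derivative hab hp0 hd).mul_right g⟩
  rintro ⟨⟩
  exact not_isCoprime_zero_zero hab

theorem inflection_number_infinite_iff_line_component_general
    {f : MvPolynomial (Fin 2) K} (hf : Squarefree f) :
    ¬ Module.Finite K (MvPowerSeries (Fin 2) K ⧸
        Ideal.span {(f : MvPowerSeries (Fin 2) K), ↑(inflectionPoly f)}) ↔
      ∃ a b : K, (a, b) ≠ (0, 0) ∧ C a * X 0 + C b * X 1 ∣ f := by
  constructor
  · intro hinf
    obtain ⟨p, hp, hpf, hpi, hp0⟩ :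
        ∃ p, Prime p ∧ p ∣ f ∧ p ∣ inflectionPoly f ∧ constantCoeff p = 0 := by
      by_contra! h
      exact hinf (finite_quotient_span_pair_of_forall_prime_constantCoeff_ne_zero h)
    exact exists_linear_dvd_of_prime_dvd_inflectionPoly hf hp hp0 hpf hpi
  · rintro ⟨a, b, hab, hl⟩
    exact not_finite_quotient_span_pair_of_linear_dvd hab hl (linear_dvd_inflectionPoly hl)

end InflectionNumber

/-- **Theorem 3.2(7), inflection part.** For a squarefree `f`, the number of
inflections `I_f` concentrated at the origin is infinite if and only if the germ of
`f = 0` at the origin contains the germ of a line, i.e. some linear polynomial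
`a·X + b·Y` with `(a,b) ≠ (0,0)` divides `f`. -/
theorem inflection_number_infinite_iff_line_component
    (f : MvPolynomial (Fin 2) ℂ) (hf : Squarefree f) :
    ¬ FiniteDimensional ℂ
        (MvPowerSeries (Fin 2) ℂ ⧸ Ideal.span {ι f, ι (infl f)}) ↔
      ∃ a b : ℂ, (a, b) ≠ (0, 0) ∧
        (MvPolynomial.C a * MvPolynomial.X 0 + MvPolynomial.C b * MvPolynomial.X 1) ∣ f :=
  inflection_number_infinite_iff_line_component_general hf
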